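/- arXiv:2504.05678 — 2 statements merged into one kernel-verified Lean document; each statement's English description precedes it below -/
import Mathlib

section
/- Let n ≥ 3 and let < be a linear order on the set of objects O. The designator rule D : D_<^n → M is efficient and individually rational: at every profile P of single-peaked preferences, the allocation D(P) is Pareto efficient and gives every agent an object weakly preferred to her endowment. -/
/-!
The designator is a serial dictatorship with an endogenous order: each leaving agent takes her best
remaining object. Hence, going through the agents in order of departure, an allocation that Pareto
dominates the outcome must agree with it on every agent; this is the field `eff` of `DesInv`.

Individual rationality is subtler, since a designated agent may temporarily hold an object worse
than her endowment. Every agent holding an object below that of the leaver `i` has her peak on the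
remaining objects strictly above what she holds. Crawling up to the adjacent object is thus an
improvement by single-peakedness, and so is inheriting the leaver's object `h` as long as the
inheritor's peak is at least `h`. Otherwise the inheritor `t` has her peak in the interval between
her old object and `h`, the agents holding objects from that peak up to `h` all want to move up, and
no such agent can leave before `t`. Agents leaving from below the peak only touch objects below it,
so the configuration persists until `t` leaves with her peak, which she prefers to her endowment.
This is the field `ir_held` of `DesInv`, and it uses nothing about how `τ` selects the inheritor.
-/

/-- A preference is a strict linear order on the objects `Fin n`, encoded by its
rank function: `p o < p o'` means object `o` is strictly preferred to `o'`. -/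
abbrev Pref (n : ℕ) := Fin n ≃ Fin n

/-- `o` is strictly preferred to `o'` under `p`. -/
def prefers {n : ℕ} (p : Pref n) (o o' : Fin n) : Prop := p o < p o'

/-- `o` is weakly preferred to `o'` under `p` (i.e. `o P o'` or `o = o'`). -/
def weakPref {n : ℕ} (p : Pref n) (o o' : Fin n) : Prop := p o ≤ p o'

/-- The top-ranked object `r_1(p)`. -/
def topObj {n : ℕ} [NeZero n] (p : Pref n) : Fin n := p.symm 0

/-- The second-ranked object `r_2(p)`. -/
def secondObj {n : ℕ} [NeZero n] (p : Pref n) : Fin n := p.symm 1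

/-- The `p`-best object of a (nonempty) finite set `S`: `max^p S`. -/
noncomputable def best {n : ℕ} [NeZero n] (p : Pref n) (S : Finset (Fin n)) : Fin n :=
  (S.toList.argmin (fun o => p o)).getD 0

/-- A profile belongs to the domain `D` coordinatewise. -/
def inD {n : ℕ} (D : Set (Pref n)) (P : Fin n → Pref n) : Prop := ∀ i, P i ∈ D

/-- Individual rationality of an allocation at a profile: each agent `i` weakly
prefers her assigned object to her endowment `o_i = i`. -/
def IRAt {n : ℕ} (P : Fin n → Pref n) (m : Fin n → Fin n) : Prop :=
  ∀ i, weakPref (P i) (m i) i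

/-- `m'` Pareto dominates `m` at profile `P`. -/
def ParetoDom {n : ℕ} (P : Fin n → Pref n) (m' m : Fin n → Fin n) : Prop :=
  (∀ i, weakPref (P i) (m' i) (m i)) ∧ ∃ j, prefers (P j) (m' j) (m j)

/-- Pareto efficiency of an allocation at a profile. -/
def EffAt {n : ℕ} (P : Fin n → Pref n) (m : Fin n → Fin n) : Prop :=
  ¬ ∃ m' : Fin n → Fin n, Function.Bijective m' ∧ ParetoDom P m' m

/-- A rule maps profiles from the domain to allocations (bijections `N → O`). -/
def IsRule {n : ℕ} (D : Set (Pref n)) (f : (Fin n → Pref n) → (Fin n → Fin n)) : Prop :=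
  ∀ P, inD D P → Function.Bijective (f P)

def Efficient {n : ℕ} (D : Set (Pref n)) (f : (Fin n → Pref n) → (Fin n → Fin n)) : Prop :=
  ∀ P, inD D P → EffAt P (f P)

def IndRational {n : ℕ} (D : Set (Pref n)) (f : (Fin n → Pref n) → (Fin n → Fin n)) : Prop :=
  ∀ P, inD D P → IRAt P (f P)

def StrategyProof {n : ℕ} (D : Set (Pref n)) (f : (Fin n → Pref n) → (Fin n → Fin n)) : Prop :=
  ∀ P, inD D P → ∀ i, ∀ p' ∈ D, weakPref (P i) (f P i) (f (Function.update P i p') i)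

/-- The active agents at profile `P` (those whose top object differs from their
endowment); since `o_i = i`, the set of active objects coincides with it. -/
def activeAgents {n : ℕ} [NeZero n] (P : Fin n → Pref n) : Finset (Fin n) :=
  Finset.univ.filter (fun i => topObj (P i) ≠ i)

/-- Agent `i` is the acclaimed agent at profile `P`. -/
def acclaimed {n : ℕ} [NeZero n] (P : Fin n → Pref n) (i : Fin n) : Prop :=
  2 < (activeAgents P).card ∧ i ∈ activeAgents P ∧
    best (P i) (activeAgents P) ≠ i ∧
    ∀ j ∈ activeAgents P, j ≠ i → best (P j) (activeAgents P) = i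

/-- Equity under unanimous acclaim. -/
def EquityUA {n : ℕ} [NeZero n] (D : Set (Pref n))
    (f : (Fin n → Pref n) → (Fin n → Fin n)) : Prop :=
  ∀ P, inD D P → ∀ i, acclaimed P i → f P i = best (P i) (activeAgents P)

/-- Agents `i` and `j` form the acclaimed pair at profile `P`. -/
def acclaimedPair {n : ℕ} [NeZero n] (P : Fin n → Pref n) (i j : Fin n) : Prop :=
  ∃ Ni Nj : Finset (Fin n),
    Disjoint Ni Nj ∧ Ni ∪ Nj = activeAgents P ∧ Ni.card = Nj.card ∧ 1 < Ni.card ∧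
    i ∈ Nj ∧ j ∈ Ni ∧
    (∀ l ∈ Ni, best (P l) (activeAgents P) = i) ∧
    (∀ l ∈ Nj, best (P l) (activeAgents P) = j)

/-- Equity under bipartite acclaim. -/
def EquityBA {n : ℕ} [NeZero n] (D : Set (Pref n))
    (f : (Fin n → Pref n) → (Fin n → Fin n)) : Prop :=
  ∀ P, inD D P → ∀ i j, acclaimedPair P i j → f P i = j ∨ f P j = i

/-- Equity⁺ under bipartite acclaim. -/
def EquityPlusBA {n : ℕ} [NeZero n] (D : Set (Pref n))
    (f : (Fin n → Pref n) → (Fin n → Fin n)) : Prop :=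
  ∀ P, inD D P → ∀ i j, acclaimedPair P i j → f P i = j ∧ f P j = i

/-- Single-peakedness of `p` w.r.t. the linear order on objects encoded by the
position permutation `σ` (`o < o'` iff `σ o < σ o'`). -/
def singlePeaked {n : ℕ} [NeZero n] (σ : Fin n ≃ Fin n) (p : Pref n) : Prop :=
  ∀ o o' : Fin n,
    ((σ o' < σ o ∧ σ o < σ (topObj p)) ∨ (σ (topObj p) < σ o ∧ σ o < σ o')) →
    prefers p o o'

/-- The full single-peaked domain `D_<`. -/
def spDomain {n : ℕ} [NeZero n] (σ : Fin n ≃ Fin n) : Set (Pref n) :=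
  {p | singlePeaked σ p}

/-- `D` is a single-peaked domain. -/
def IsSPDomain {n : ℕ} [NeZero n] (D : Set (Pref n)) : Prop :=
  ∃ σ : Fin n ≃ Fin n, D ⊆ spDomain σ

/-- Objects `o` and `o'` are connected in `D`: `o ∼ o'`. -/
def connectedObj {n : ℕ} [NeZero n] (D : Set (Pref n)) (o o' : Fin n) : Prop :=
  ∃ p ∈ D, ∃ p' ∈ D, topObj p = o ∧ secondObj p = o' ∧ topObj p' = o' ∧ secondObj p' = o

/-- `D` is path-connected. -/
def pathConnected {n : ℕ} [NeZero n] (D : Set (Pref n)) : Prop :=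
  ∀ o o' : Fin n, o ≠ o' → ∃ l : List (Fin n),
    l.Nodup ∧ l.head? = some o ∧ l.getLast? = some o' ∧ l.Chain' (connectedObj D)

/-- `p` and `p'` rank all objects in exactly opposite orders. -/
def reversedPair {n : ℕ} (p p' : Pref n) : Prop :=
  ∀ o o', prefers p o o' ↔ prefers p' o' o

/-- A rich domain: path-connected and containing two completely reversed preferences. -/
def richDomain {n : ℕ} [NeZero n] (D : Set (Pref n)) : Prop :=
  pathConnected D ∧ ∃ p ∈ D, ∃ p' ∈ D, reversedPair p p'

/-- The restriction `→(x,y,z) ∈ R(D)`: whenever `x` is the best of `{x,y,z}`,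
`y` is ranked above `z`. -/
def RestrR {n : ℕ} [NeZero n] (D : Set (Pref n)) (x y z : Fin n) : Prop :=
  ∀ p ∈ D, best p {x, y, z} = x → prefers p y z

/-- The ternary relation `(x,y,z) ∈ B(D)`. -/
def RelB {n : ℕ} [NeZero n] (D : Set (Pref n)) (x y z : Fin n) : Prop :=
  RestrR D x y z ∧ RestrR D z y x

/-! ### Extensive game forms and obvious strategy-proofness -/

/-- An extensive game form: a finite rooted tree of histories (lists of actions,
prefix-closed), a player function and an outcome function on terminal histories. -/
structure GameForm (n : ℕ) where
  hist : Finset (List ℕ)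
  root_mem : [] ∈ hist
  prefix_closed : ∀ h a, h ++ [a] ∈ hist → h ∈ hist
  player : List ℕ → Fin n
  outcome : List ℕ → (Fin n → Fin n)

/-- A strategy chooses an action at every history. -/
abbrev Strategy : Type := List ℕ → ℕ

/-- Terminal histories of the game form. -/
def GameForm.Terminal {n : ℕ} (Γ : GameForm n) (h : List ℕ) : Prop :=
  h ∈ Γ.hist ∧ ∀ a, h ++ [a] ∉ Γ.hist

/-- A strategy of agent `i` is valid if it always chooses a feasible action. -/
def GameForm.ValidStrat {n : ℕ} (Γ : GameForm n) (i : Fin n) (s : Strategy) : Prop :=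
  ∀ h ∈ Γ.hist, ¬ Γ.Terminal h → Γ.player h = i → h ++ [s h] ∈ Γ.hist

/-- Play from `h` under the strategy profile `s` reaches history `h'`. -/
inductive GameForm.Reaches {n : ℕ} (Γ : GameForm n) (s : Fin n → Strategy) :
    List ℕ → List ℕ → Prop
  | refl (h : List ℕ) : GameForm.Reaches Γ s h h
  | step {h h' : List ℕ} : GameForm.Reaches Γ s h h' → h' ∈ Γ.hist → ¬ Γ.Terminal h' →
      GameForm.Reaches Γ s h (h' ++ [s (Γ.player h') h'])

/-- `o` belongs to the feasible set `X_i(h, s_i)` of agent `i` at history `h`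
given her strategy `si`. -/
def GameForm.Feas {n : ℕ} (Γ : GameForm n) (i : Fin n) (h : List ℕ) (si : Strategy)
    (o : Fin n) : Prop :=
  ∃ s : Fin n → Strategy, (∀ j, Γ.ValidStrat j (s j)) ∧ s i = si ∧
    ∃ t, Γ.Reaches s h t ∧ Γ.Terminal t ∧ Γ.outcome t i = o

/-- `h` is a decision node of `i` reachable (on-path) when `i` plays `si`. -/
def GameForm.ReachableNode {n : ℕ} (Γ : GameForm n) (i : Fin n) (si : Strategy)
    (h : List ℕ) : Prop :=
  h ∈ Γ.hist ∧ ¬ Γ.Terminal h ∧ Γ.player h = i ∧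
    ∃ s : Fin n → Strategy, (∀ j, Γ.ValidStrat j (s j)) ∧ s i = si ∧ Γ.Reaches s [] h

/-- `si` obviously dominates `si'` at preference `p`: at every earliest point of
departure, the worst feasible outcome under `si` is weakly preferred to the best
feasible outcome under `si'`. -/
def GameForm.ObvDom {n : ℕ} (Γ : GameForm n) (i : Fin n) (p : Pref n)
    (si si' : Strategy) : Prop :=
  ∀ h, Γ.ReachableNode i si h → Γ.ReachableNode i si' h → si h ≠ si' h →
    ∀ o o', Γ.Feas i h si o → Γ.Feas i h si' o' → weakPref p o o'

/-- Obvious strategy-proofness of a rule `f` on domain `D`. -/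
def OSP {n : ℕ} (D : Set (Pref n)) (f : (Fin n → Pref n) → (Fin n → Fin n)) : Prop :=
  ∃ (Γ : GameForm n) (S : Fin n → Pref n → Strategy),
    (∀ i p, p ∈ D → Γ.ValidStrat i (S i p)) ∧
    (∀ i p, p ∈ D → ∀ s', Γ.ValidStrat i s' → Γ.ObvDom i p (S i p) s') ∧
    (∀ P : Fin n → Pref n, inD D P →
      ∃ t, Γ.Reaches (fun j => S j (P j)) [] t ∧ Γ.Terminal t ∧ Γ.outcome t = f P)

/-! ### The crawler, the designator, and top trading cycles -/

/-- The running state of the crawler/designator algorithms: the sub-allocation of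
objects currently held by remaining agents, and the final assignments so far. -/
structure AlgState (n : ℕ) where
  held : Fin n → Option (Fin n)
  res : Fin n → Option (Fin n)

/-- The object currently held by agent `i`. -/
def heldObj {n : ℕ} [NeZero n] (st : AlgState n) (i : Fin n) : Fin n := (st.held i).getD 0

/-- The remaining agents. -/
def remAgents {n : ℕ} (st : AlgState n) : Finset (Fin n) :=
  Finset.univ.filter (fun i => (st.held i).isSome)

/-- The remaining objects. -/
def remObjs {n : ℕ} [NeZero n] (st : AlgState n) : Finset (Fin n) :=
  (remAgents st).image (heldObj st)

/-- The object of `S` adjacently larger than `o` w.r.t. the order `σ`. -/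
noncomputable def adjLarger {n : ℕ} (σ : Fin n ≃ Fin n) (S : Finset (Fin n)) (o : Fin n) : Fin n :=
  ((S.filter (fun o' => σ o < σ o')).toList.argmin (fun o' => σ o')).getD o

/-- The agent `i^s` leaving at the current step: the remaining agent holding the
`σ`-smallest object among those whose best remaining object is weakly below their
held object. -/
noncomputable def leaver {n : ℕ} [NeZero n] (σ : Fin n ≃ Fin n) (P : Fin n → Pref n)
    (st : AlgState n) : Option (Fin n) :=
  ((remAgents st).filter
      (fun i => σ (best (P i) (remObjs st)) ≤ σ (heldObj st i))).toList.argmin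
    (fun i => σ (heldObj st i))

/-- One step of the crawler: the leaving agent takes her best remaining object,
and every remaining agent holding an object weakly above the taken object and
strictly below the leaver's object crawls to the adjacently larger object. -/
noncomputable def crawlerStep {n : ℕ} [NeZero n] (σ : Fin n ≃ Fin n) (P : Fin n → Pref n)
    (st : AlgState n) : AlgState n :=
  match leaver σ P st with
  | none => st
  | some is =>
    let taken := best (P is) (remObjs st)
    { held := fun j =>
        if j = is then none
        else if (st.held j).isSome = true ∧ σ taken ≤ σ (heldObj st j) ∧
            σ (heldObj st j) < σ (heldObj st is) then
          some (adjLarger σ (remObjs st) (heldObj st j))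
        else st.held j,
      res := Function.update st.res is (some taken) }

/-- Initially every agent holds her endowment `o_i = i`. -/
def crawlerInit (n : ℕ) : AlgState n := ⟨fun i => some i, fun _ => none⟩

/-- The crawler rule w.r.t. the object order `σ`. -/
noncomputable def crawler {n : ℕ} [NeZero n] (σ : Fin n ≃ Fin n) (P : Fin n → Pref n) :
    Fin n → Fin n :=
  fun i => (((crawlerStep σ P)^[n] (crawlerInit n)).res i).getD 0

/-- `τ(i)`: the active agent whose endowment is `max^{P_i} O_{m̄⁰}`. -/
noncomputable def desTau {n : ℕ} [NeZero n] (P : Fin n → Pref n) (i : Fin n) : Fin n :=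
  best (P i) (activeAgents P)

/-- Stage I of the designator: null agents receive their endowments and leave. -/
def desInit {n : ℕ} [NeZero n] (P : Fin n → Pref n) : AlgState n :=
  { held := fun i => if topObj (P i) = i then none else some i,
    res := fun i => if topObj (P i) = i then some i else none }

/-- One step of Stage II of the designator: the leaving agent `i^s` takes her best
remaining object; if `τ(i^s)` is remaining and holds an object weakly above the
taken object and strictly below `i^s`'s held object, then `τ(i^s)` directly
inherits `i^s`'s object and only agents below `τ(i^s)` crawl (designating);
otherwise the crawling updating applies. -/
noncomputable def desStep {n : ℕ} [NeZero n] (σ : Fin n ≃ Fin n) (P : Fin n → Pref n)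
    (st : AlgState n) : AlgState n :=
  match leaver σ P st with
  | none => st
  | some is =>
    let taken := best (P is) (remObjs st)
    let t := desTau P is
    if (st.held t).isSome = true ∧ σ taken ≤ σ (heldObj st t) ∧
        σ (heldObj st t) < σ (heldObj st is) then
      { held := fun j =>
          if j = is then none
          else if j = t then some (heldObj st is)
          else if (st.held j).isSome = true ∧ σ taken ≤ σ (heldObj st j) ∧
              σ (heldObj st j) < σ (heldObj st t) then
            some (adjLarger σ (remObjs st) (heldObj st j))
          else st.held j,
        res := Function.update st.res is (some taken) }
    else
      { held := fun j =>
          if j = is then none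
          else if (st.held j).isSome = true ∧ σ taken ≤ σ (heldObj st j) ∧
              σ (heldObj st j) < σ (heldObj st is) then
            some (adjLarger σ (remObjs st) (heldObj st j))
          else st.held j,
        res := Function.update st.res is (some taken) }

/-- The designator rule w.r.t. the object order `σ`. -/
noncomputable def designator {n : ℕ} [NeZero n] (σ : Fin n ≃ Fin n) (P : Fin n → Pref n) :
    Fin n → Fin n :=
  fun i => (((desStep σ P)^[n] (desInit P)).res i).getD 0

/-- One round of top trading cycles: every remaining agent points to the owner of
her favorite remaining object (owner of object `o` is agent `o`), and every agent
lying on a pointing cycle receives the object she points to and leaves. -/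
noncomputable def ttcStep {n : ℕ} [NeZero n] (P : Fin n → Pref n) (res : Fin n → Option (Fin n)) :
    Fin n → Option (Fin n) :=
  let rem : Finset (Fin n) := Finset.univ.filter (fun i => res i = none)
  let pt : Fin n → Fin n := fun i => best (P i) rem
  fun i =>
    match res i with
    | some o => some o
    | none =>
      if (List.range (n + 1)).any (fun k => (k != 0) && (pt^[k] i == i)) then some (pt i)
      else none

/-- The top-trading-cycle rule. -/
noncomputable def ttc {n : ℕ} [NeZero n] (P : Fin n → Pref n) : Fin n → Fin n :=
  fun i => (((ttcStep P)^[n] (fun _ => none)) i).getD 0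


/-! ### Specifications of the selection operators -/

lemma best_mem {n : ℕ} [NeZero n] (p : Pref n) {S : Finset (Fin n)} (hS : S.Nonempty) :
    best p S ∈ S := by
  unfold best
  cases h : S.toList.argmin (fun o => p o) with
  | none =>
    rw [List.argmin_eq_none, Finset.toList_eq_nil] at h
    exact absurd h hS.ne_empty
  | some a => simpa using List.argmin_mem h

lemma best_le {n : ℕ} [NeZero n] (p : Pref n) {S : Finset (Fin n)} {o : Fin n} (ho : o ∈ S) :
    p (best p S) ≤ p o := by
  unfold best
  cases h : S.toList.argmin (fun o => p o) with
  | none =>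
    rw [List.argmin_eq_none, Finset.toList_eq_nil] at h
    simp [h] at ho
  | some a => exact List.le_of_mem_argmin (f := fun o => p o) (by simpa using ho) h

/-- The best object stays best when objects other than it are removed. -/
lemma best_eq_of_subset {n : ℕ} [NeZero n] (p : Pref n) {S T : Finset (Fin n)} (hTS : T ⊆ S)
    (h : best p S ∈ T) : best p T = best p S :=
  p.injective (le_antisymm (best_le p h) (best_le p (hTS (best_mem p ⟨_, h⟩))))

lemma adjLarger_spec {n : ℕ} (σ : Fin n ≃ Fin n) {S : Finset (Fin n)} {a c : Fin n}
    (hc : c ∈ S) (hac : σ a < σ c) :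
    adjLarger σ S a ∈ S ∧ σ a < σ (adjLarger σ S a) ∧
      ∀ d ∈ S, σ a < σ d → σ (adjLarger σ S a) ≤ σ d := by
  unfold adjLarger
  cases h : (S.filter (fun o' => σ a < σ o')).toList.argmin (fun o' => σ o') with
  | none =>
    rw [List.argmin_eq_none, Finset.toList_eq_nil] at h
    have : c ∈ S.filter (fun o' => σ a < σ o') := by simp [hc, hac]
    simp [h] at this
  | some b =>
    have hb := List.argmin_mem h
    simp only [Finset.mem_toList, Finset.mem_filter] at hb
    refine ⟨hb.1, hb.2, fun d hd had => ?_⟩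
    exact List.le_of_mem_argmin (f := fun o' => σ o') (by simp [hd, had]) h

lemma heldObj_eq {n : ℕ} [NeZero n] {st : AlgState n} {i a : Fin n} (h : st.held i = some a) :
    heldObj st i = a := by simp [heldObj, h]

lemma mem_remAgents {n : ℕ} {st : AlgState n} {i : Fin n} :
    i ∈ remAgents st ↔ ∃ a, st.held i = some a := by
  simp [remAgents, Option.isSome_iff_exists]

lemma mem_remObjs {n : ℕ} [NeZero n] {st : AlgState n} {a : Fin n} :
    a ∈ remObjs st ↔ ∃ i, st.held i = some a := by
  simp only [remObjs, Finset.mem_image, mem_remAgents]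
  constructor
  · rintro ⟨i, ⟨b, hb⟩, rfl⟩
    exact ⟨i, by rw [heldObj_eq hb, hb]⟩
  · rintro ⟨i, hi⟩
    exact ⟨i, ⟨a, hi⟩, heldObj_eq hi⟩

lemma leaver_spec {n : ℕ} [NeZero n] {σ : Fin n ≃ Fin n} {P : Fin n → Pref n}
    {st : AlgState n} {i : Fin n} (h : leaver σ P st = some i) :
    ∃ a, st.held i = some a ∧ σ (best (P i) (remObjs st)) ≤ σ a ∧
      ∀ k c, st.held k = some c → σ c < σ a → σ c < σ (best (P k) (remObjs st)) := by
  have hi := List.argmin_mem h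
  simp only [Finset.mem_toList, Finset.mem_filter, mem_remAgents] at hi
  obtain ⟨⟨a, ha⟩, hle⟩ := hi
  rw [heldObj_eq ha] at hle
  refine ⟨a, ha, hle, fun k c hk hca => ?_⟩
  by_contra hcon
  have hmem : k ∈ ((remAgents st).filter
      (fun i => σ (best (P i) (remObjs st)) ≤ σ (heldObj st i))).toList := by
    simp only [Finset.mem_toList, Finset.mem_filter, mem_remAgents, heldObj_eq hk]
    exact ⟨⟨c, hk⟩, not_lt.1 hcon⟩
  have := List.le_of_mem_argmin (f := fun i => σ (heldObj st i)) hmem h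
  rw [heldObj_eq ha, heldObj_eq hk] at this
  exact absurd hca (not_lt.2 this)

/-- Some agent can always leave: the one holding the largest remaining object qualifies. -/
lemma leaver_none {n : ℕ} [NeZero n] {σ : Fin n ≃ Fin n} {P : Fin n → Pref n}
    {st : AlgState n} (h : leaver σ P st = none) : remAgents st = ∅ := by
  rw [leaver, List.argmin_eq_none, Finset.toList_eq_nil] at h
  by_contra hne
  obtain ⟨i, hi, hmax⟩ := Finset.exists_max_image (remAgents st) (fun i => σ (heldObj st i))
    (Finset.nonempty_iff_ne_empty.2 hne)
  have hS : (remObjs st).Nonempty := ⟨_, Finset.mem_image_of_mem _ hi⟩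
  obtain ⟨j, hj, hjb⟩ := Finset.mem_image.1 (best_mem (P i) hS)
  have : i ∈ (remAgents st).filter
      (fun i => σ (best (P i) (remObjs st)) ≤ σ (heldObj st i)) := by
    rw [Finset.mem_filter]
    refine ⟨hi, ?_⟩
    change σ (best (P i) ((remAgents st).image (heldObj st))) ≤ _
    rw [← hjb]
    exact hmax j hj
  simp [h] at this

/-- A single-peaked preference restricted to `S` increases up to its best element on `S`. -/
lemma sp_lt {n : ℕ} [NeZero n] {σ : Fin n ≃ Fin n} {p : Pref n} (hp : singlePeaked σ p)
    {S : Finset (Fin n)} {o o' : Fin n} (ho : o ∈ S) (ho' : o' ∈ S) (h : σ o < σ o')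
    (h' : σ o' ≤ σ (best p S)) : p o' ≤ p o := by
  rcases h'.lt_or_eq with hlt | heq
  · rcases lt_trichotomy (σ o') (σ (topObj p)) with h1 | h1 | h1
    · exact (hp o' o (Or.inl ⟨h, h1⟩)).le
    · rw [σ.injective h1]
      simp [topObj]
    · exact absurd (hp o' _ (Or.inr ⟨h1, hlt⟩)) (not_lt.2 (best_le p ho'))
  · rw [σ.injective heq]
    exact best_le p ho

/-! ### One step of Stage II -/

/-- The common form of the two updating rules: agent `i` holding `h` leaves with her best object
`b`, agent `c` holding `g` inherits `h`, and agents holding objects in `[b, g)` crawl. The crawling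
update is the case `c = i`, where the inheritance is void. -/
structure StepSpec {n : ℕ} [NeZero n] (σ : Fin n ≃ Fin n) (P : Fin n → Pref n)
    (st st' : AlgState n) (i h b c g : Fin n) : Prop where
  held_i : st.held i = some h
  b_eq : b = best (P i) (remObjs st)
  b_le : σ b ≤ σ h
  min : ∀ k d, st.held k = some d → σ d < σ h → σ d < σ (best (P k) (remObjs st))
  held_c : st.held c = some g
  b_le_g : σ b ≤ σ g
  g_le : c = i ∨ σ g < σ h
  out : st'.held i = none
  inherit : c ≠ i → st'.held c = some h
  crawl : ∀ j d, j ≠ i → j ≠ c → st.held j = some d → σ b ≤ σ d → σ d < σ g →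
    st'.held j = some (adjLarger σ (remObjs st) d)
  stay : ∀ j d, j ≠ i → j ≠ c → st.held j = some d → ¬ (σ b ≤ σ d ∧ σ d < σ g) →
    st'.held j = some d
  absent : ∀ j, st.held j = none → st'.held j = none
  res_eq : st'.res = Function.update st.res i (some b)

lemma desStep_spec {n : ℕ} [NeZero n] {σ : Fin n ≃ Fin n} {P : Fin n → Pref n}
    {st : AlgState n} {i : Fin n} (hl : leaver σ P st = some i) :
    ∃ h b c g, StepSpec σ P st (desStep σ P st) i h b c g := by
  obtain ⟨h, hi, hle, hmin⟩ := leaver_spec hl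
  have hh := heldObj_eq hi
  by_cases hd : (st.held (desTau P i)).isSome = true ∧
      σ (best (P i) (remObjs st)) ≤ σ (heldObj st (desTau P i)) ∧
      σ (heldObj st (desTau P i)) < σ (heldObj st i)
  · obtain ⟨g, hg⟩ := Option.isSome_iff_exists.1 hd.1
    have hgo := heldObj_eq hg
    unfold desStep
    rw [hl]
    dsimp only
    rw [if_pos hd]
    rw [hgo, hh] at hd
    refine ⟨h, _, desTau P i, g, hi, rfl, hle, hmin, hg, hd.2.1, Or.inr hd.2.2, ?_, ?_, ?_, ?_, ?_,
      rfl⟩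
    · simp
    · intro hc; simp [hc, hh]
    · intro j d h1 h2 hj h3 h4
      simp [h1, h2, hj, heldObj_eq hj, hgo, h3, h4]
    · intro j d h1 h2 hj h3
      simp only [h1, h2, hj, heldObj_eq hj, hgo, if_false, Option.isSome_some, true_and, h3]
    · intro j hj
      have h2 : j ≠ desTau P i := by rintro rfl; simp [hj] at hg
      simp [hj, h2]
  · unfold desStep
    rw [hl]
    dsimp only
    rw [if_neg hd]
    refine ⟨h, _, i, h, hi, rfl, hle, hmin, hi, hle, Or.inl rfl, ?_, ?_, ?_, ?_, ?_, rfl⟩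
    · simp
    · intro hc; exact absurd rfl hc
    · intro j d h1 h2 hj h3 h4
      simp [h1, hj, heldObj_eq hj, hh, h3, h4]
    · intro j d h1 h2 hj h3
      simp only [h1, hj, heldObj_eq hj, hh, if_false, Option.isSome_some, true_and, h3]
    · intro j hj
      simp [hj]

namespace StepSpec

variable {n : ℕ} [NeZero n] {σ : Fin n ≃ Fin n} {P : Fin n → Pref n}
  {st st' : AlgState n} {i h b c g : Fin n}

/-- The possible origins of an object held after a step. -/
lemma cases_held (H : StepSpec σ P st st' i h b c g) {j a : Fin n} (hj : st'.held j = some a) :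
    j ≠ i ∧ ((j = c ∧ a = h ∧ σ g < σ h) ∨
      (j ≠ c ∧ ∃ d, st.held j = some d ∧ σ b ≤ σ d ∧ σ d < σ g ∧
        a = adjLarger σ (remObjs st) d) ∨
      (j ≠ c ∧ st.held j = some a ∧ ¬ (σ b ≤ σ a ∧ σ a < σ g))) := by
  have hji : j ≠ i := by rintro rfl; simp [H.out] at hj
  refine ⟨hji, ?_⟩
  by_cases hjc : j = c
  · subst hjc
    have := H.inherit hji
    rw [hj] at this
    exact Or.inl ⟨rfl, by simpa using this, H.g_le.resolve_left hji⟩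
  · right
    cases hd : st.held j with
    | none => simp [H.absent j hd] at hj
    | some d =>
      by_cases hr : σ b ≤ σ d ∧ σ d < σ g
      · have := H.crawl j d hji hjc hd hr.1 hr.2
        rw [hj] at this
        exact Or.inl ⟨hjc, d, rfl, hr.1, hr.2, by simpa using this⟩
      · have := H.stay j d hji hjc hd hr
        rw [hj] at this
        obtain rfl : a = d := by simpa using this
        exact Or.inr ⟨hjc, rfl, hr⟩

lemma g_mem (H : StepSpec σ P st st' i h b c g) : g ∈ remObjs st := mem_remObjs.2 ⟨c, H.held_c⟩

lemma g_le_h (H : StepSpec σ P st st' i h b c g) : σ g ≤ σ h := by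
  rcases H.g_le with rfl | hlt
  · have := H.held_c
    rw [H.held_i] at this
    rw [Option.some.inj this]
  · exact hlt.le

lemma adj (H : StepSpec σ P st st' i h b c g) {d : Fin n} (hd : σ d < σ g) :
    adjLarger σ (remObjs st) d ∈ remObjs st ∧ σ d < σ (adjLarger σ (remObjs st) d) ∧
      (∀ e ∈ remObjs st, σ d < σ e → σ (adjLarger σ (remObjs st) d) ≤ σ e) ∧
      σ (adjLarger σ (remObjs st) d) ≤ σ g := by
  obtain ⟨h1, h2, h3⟩ := adjLarger_spec σ H.g_mem hd
  exact ⟨h1, h2, h3, h3 _ H.g_mem hd⟩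

lemma inj' (H : StepSpec σ P st st' i h b c g)
    (inj : ∀ j k a, st.held j = some a → st.held k = some a → j = k)
    (j k a : Fin n) (hj : st'.held j = some a) (hk : st'.held k = some a) : j = k := by
  obtain ⟨hji, hj⟩ := H.cases_held hj
  obtain ⟨hki, hk⟩ := H.cases_held hk
  -- A crawler and a stayer never meet: crawlers land in `(b, g]`, and `g` has been vacated.
  have crawl_stay : ∀ j k d : Fin n, k ≠ c → σ b ≤ σ d → σ d < σ g →
      a = adjLarger σ (remObjs st) d → st.held k = some a → ¬ (σ b ≤ σ a ∧ σ a < σ g) →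
      False := by
    intro j k d hkc h1 h2 h3 h4 h5
    obtain ⟨-, g2, -, g4⟩ := H.adj h2
    rw [← h3] at g2 g4
    have : a = g := σ.injective (le_antisymm g4 (not_lt.1 fun hlt => h5 ⟨h1.trans g2.le, hlt⟩))
    subst this
    exact hkc (inj _ _ _ h4 H.held_c)
  rcases hj with ⟨rfl, ha, hj⟩ | ⟨hjc, d, hjd, h1, h2, h3⟩ | ⟨hjc, hjd, h1⟩ <;>
  rcases hk with ⟨rfl, ha', hk⟩ | ⟨hkc, e, hke, e1, e2, e3⟩ | ⟨hkc, hke, e1⟩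
  · rfl
  · obtain ⟨-, -, -, g4⟩ := H.adj e2
    rw [← e3, ha] at g4
    exact absurd hj (not_lt.2 g4)
  · rw [ha] at hke
    exact absurd (inj _ _ _ hke H.held_i) hki
  · obtain ⟨-, -, -, g4⟩ := H.adj h2
    rw [← h3, ha'] at g4
    exact absurd hk (not_lt.2 g4)
  · obtain ⟨-, g2, g3, -⟩ := H.adj h2
    obtain ⟨-, f2, f3, -⟩ := H.adj e2
    rw [← h3] at g2 g3
    rw [← e3] at f2 f3
    rcases lt_trichotomy (σ d) (σ e) with hlt | heq | hlt
    · exact absurd f2 (not_lt.2 (g3 e (mem_remObjs.2 ⟨_, hke⟩) hlt))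
    · rw [σ.injective heq] at hjd
      exact inj _ _ _ hjd hke
    · exact absurd g2 (not_lt.2 (f3 d (mem_remObjs.2 ⟨_, hjd⟩) hlt))
  · exact (crawl_stay j k d hkc h1 h2 h3 hke e1).elim
  · rw [ha'] at hjd
    exact absurd (inj _ _ _ hjd H.held_i) hji
  · exact (crawl_stay k j e hjc e1 e2 e3 hjd h1).elim
  · exact inj _ _ _ hjd hke

lemma held_mem (H : StepSpec σ P st st' i h b c g)
    (inj : ∀ j k a, st.held j = some a → st.held k = some a → j = k)
    {j a : Fin n} (hj : st'.held j = some a) : a ∈ remObjs st ∧ a ≠ b := by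
  obtain ⟨hji, hj⟩ := H.cases_held hj
  rcases hj with ⟨rfl, ha, hj⟩ | ⟨hjc, d, hjd, h1, h2, h3⟩ | ⟨hjc, hjd, h1⟩
  · subst ha
    refine ⟨mem_remObjs.2 ⟨i, H.held_i⟩, ?_⟩
    rintro rfl
    exact absurd hj (not_lt.2 H.b_le_g)
  · obtain ⟨g1, g2, -, -⟩ := H.adj h2
    rw [← h3] at g1 g2
    refine ⟨g1, ?_⟩
    rintro rfl
    exact absurd g2 (not_lt.2 h1)
  · refine ⟨mem_remObjs.2 ⟨j, hjd⟩, ?_⟩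
    rintro rfl
    have : a = g := σ.injective (le_antisymm H.b_le_g (not_lt.1 fun hlt => h1 ⟨le_rfl, hlt⟩))
    subst this
    exact hjc (inj _ _ _ hjd H.held_c)

lemma remAgents_eq (H : StepSpec σ P st st' i h b c g) :
    remAgents st' = (remAgents st).erase i := by
  ext j
  simp only [Finset.mem_erase, mem_remAgents]
  constructor
  · rintro ⟨a, ha⟩
    obtain ⟨hji, ⟨rfl, -⟩ | ⟨-, d, hd, -⟩ | ⟨-, hd, -⟩⟩ := H.cases_held ha
    · exact ⟨hji, _, H.held_c⟩
    · exact ⟨hji, _, hd⟩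
    · exact ⟨hji, _, hd⟩
  · rintro ⟨hji, d, hd⟩
    by_cases hjc : j = c
    · subst hjc
      exact ⟨_, H.inherit hji⟩
    · by_cases hr : σ b ≤ σ d ∧ σ d < σ g
      · exact ⟨_, H.crawl j d hji hjc hd hr.1 hr.2⟩
      · exact ⟨_, H.stay j d hji hjc hd hr⟩

lemma i_mem (H : StepSpec σ P st st' i h b c g) : i ∈ remAgents st :=
  mem_remAgents.2 ⟨h, H.held_i⟩

lemma b_mem (H : StepSpec σ P st st' i h b c g) : b ∈ remObjs st := by
  rw [H.b_eq]
  exact best_mem _ ⟨g, H.g_mem⟩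

end StepSpec

lemma card_remObjs {n : ℕ} [NeZero n] {st : AlgState n}
    (inj : ∀ j k a, st.held j = some a → st.held k = some a → j = k) :
    (remObjs st).card = (remAgents st).card := by
  refine Finset.card_image_of_injOn fun j hj k hk hjk => ?_
  obtain ⟨a, ha⟩ := mem_remAgents.1 hj
  obtain ⟨d, hd⟩ := mem_remAgents.1 hk
  simp only [heldObj_eq ha, heldObj_eq hd] at hjk
  subst hjk
  exact inj _ _ _ ha hd

/-- The taken object is exactly what disappears: the inclusion from left to right is an equality
since the held objects stay distinct and exactly one agent leaves. -/
lemma StepSpec.remObjs_eq {n : ℕ} [NeZero n] {σ : Fin n ≃ Fin n} {P : Fin n → Pref n}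
    {st st' : AlgState n} {i h b c g : Fin n} (H : StepSpec σ P st st' i h b c g)
    (inj : ∀ j k a, st.held j = some a → st.held k = some a → j = k) :
    remObjs st' = (remObjs st).erase b := by
  apply Finset.eq_of_subset_of_card_le
  · intro a ha
    obtain ⟨j, hj⟩ := mem_remObjs.1 ha
    have := H.held_mem inj hj
    exact Finset.mem_erase.2 ⟨this.2, this.1⟩
  · rw [Finset.card_erase_of_mem H.b_mem, card_remObjs inj, card_remObjs (H.inj' inj),
      H.remAgents_eq, Finset.card_erase_of_mem H.i_mem]

/-! ### The invariant -/

/-- The invariant of the algorithm. In `eff`, any bijection weakly preferred to the partial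
assignment by all agents who have left agrees with it. In `ir_held`, a remaining agent either
weakly prefers her held object to her endowment, or her best remaining object, weakly preferred to
her endowment, lies weakly below her held object and the holders of the objects in between are all
blocked from leaving before her. -/
structure DesInv {n : ℕ} [NeZero n] (σ : Fin n ≃ Fin n) (P : Fin n → Pref n)
    (st : AlgState n) : Prop where
  inj : ∀ j k a, st.held j = some a → st.held k = some a → j = k
  res_held : ∀ j, st.held j = none ↔ ∃ a, st.res j = some a
  cover : ∀ a, a ∉ remObjs st → ∃ k, st.res k = some a
  ir_res : ∀ j a, st.res j = some a → P j a ≤ P j j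
  ir_held : ∀ j a, st.held j = some a → P j a ≤ P j j ∨
    (P j (best (P j) (remObjs st)) ≤ P j j ∧ σ (best (P j) (remObjs st)) ≤ σ a ∧
      ∀ k d, st.held k = some d → σ (best (P j) (remObjs st)) ≤ σ d → σ d < σ a →
        σ d < σ (best (P k) (remObjs st)))
  eff : ∀ m' : Fin n → Fin n, Function.Injective m' →
    (∀ j a, st.res j = some a → P j (m' j) ≤ P j a) → ∀ j a, st.res j = some a → m' j = a

lemma desInv_init {n : ℕ} [NeZero n] (σ : Fin n ≃ Fin n) (P : Fin n → Pref n) :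
    DesInv σ P (desInit P) := by
  have hheld : ∀ j a, (desInit P).held j = some a → j = a := by
    intro j a h
    by_cases ht : topObj (P j) = j <;> simp_all [desInit]
  have hres : ∀ j a, (desInit P).res j = some a → topObj (P j) = j ∧ j = a := by
    intro j a h
    by_cases ht : topObj (P j) = j <;> simp_all [desInit]
  refine ⟨?_, ?_, ?_, ?_, ?_, ?_⟩
  · intro j k a hj hk
    rw [hheld j a hj, hheld k a hk]
  · intro j
    by_cases ht : topObj (P j) = j <;> simp [desInit, ht]
  · intro a ha
    refine ⟨a, ?_⟩
    by_contra hcon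
    refine ha (mem_remObjs.2 ⟨a, ?_⟩)
    by_cases ht : topObj (P a) = a <;> simp_all [desInit]
  · intro j a h
    rw [(hres j a h).2]
  · intro j a h
    rw [hheld j a h]
    exact Or.inl le_rfl
  · intro m' _ hm j a h
    have h1 := hm j a h
    obtain ⟨h2, rfl⟩ := hres j a h
    have h3 : P j j = 0 := by
      rw [← Equiv.eq_symm_apply]
      exact h2.symm
    rw [h3] at h1
    apply (P j).injective
    rw [h3]
    exact le_antisymm h1 (Fin.zero_le _)

lemma ir_held_step {n : ℕ} [NeZero n] {σ : Fin n ≃ Fin n} {P : Fin n → Pref n}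
    (hP : inD (spDomain σ) P) {st st' : AlgState n} {i h b c g : Fin n}
    (H : StepSpec σ P st st' i h b c g) (I : DesInv σ P st) (j a : Fin n)
    (hj : st'.held j = some a) : P j a ≤ P j j ∨
    (P j (best (P j) (remObjs st')) ≤ P j j ∧ σ (best (P j) (remObjs st')) ≤ σ a ∧
      ∀ k d, st'.held k = some d → σ (best (P j) (remObjs st')) ≤ σ d → σ d < σ a →
        σ d < σ (best (P k) (remObjs st'))) := by
  have hS := H.remObjs_eq I.inj
  have hne : (remObjs st).Nonempty := ⟨_, H.g_mem⟩
  -- Only agents whose best remaining object is the taken one see their best change.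
  have hbest : ∀ k, best (P k) (remObjs st) ≠ b →
      best (P k) (remObjs st') = best (P k) (remObjs st) := by
    intro k hk
    apply best_eq_of_subset
    · rw [hS]; exact Finset.erase_subset _ _
    · rw [hS]; exact Finset.mem_erase.2 ⟨hk, best_mem _ hne⟩
  have hbest' : ∀ k, σ b < σ (best (P k) (remObjs st)) →
      best (P k) (remObjs st') = best (P k) (remObjs st) := by
    intro k hk
    exact hbest k (by rintro he; rw [he] at hk; exact lt_irrefl _ hk)
  -- Agents who hold less than the leaver satisfy the first alternative, as their peak is above.
  have hlow : ∀ k d, st.held k = some d → σ d < σ h → P k d ≤ P k k := by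
    intro k d hk hd
    rcases I.ir_held k d hk with h1 | ⟨-, h1, -⟩
    · exact h1
    · exact absurd (H.min k d hk hd) (not_lt.2 h1)
  obtain ⟨hji, hj⟩ := H.cases_held hj
  rcases hj with ⟨rfl, ha, hlt⟩ | ⟨hjc, d, hjd, h1, h2, h3⟩ | ⟨hjc, hjd, h1⟩
  · subst ha
    have hir := hlow j g H.held_c hlt
    have hpk := H.min j g H.held_c hlt
    rcases le_or_gt (σ a) (σ (best (P j) (remObjs st))) with hle | hgt
    · exact Or.inl ((sp_lt (hP j) H.g_mem (mem_remObjs.2 ⟨i, H.held_i⟩) hlt hle).trans hir)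
    · right
      have hb := hbest' j (H.b_le_g.trans_lt hpk)
      rw [hb]
      refine ⟨(best_le _ H.g_mem).trans hir, hgt.le, fun k d hk hd hda => ?_⟩
      have hgd : σ g < σ d := hpk.trans_le hd
      obtain ⟨hki, ⟨rfl, rfl, -⟩ | ⟨-, e, hke, e1, e2, e3⟩ | ⟨hkc, hke, e1⟩⟩ := H.cases_held hk
      · exact absurd hda (lt_irrefl _)
      · have := (H.adj e2).2.2.2
        rw [← e3] at this
        exact absurd hgd (not_lt.2 this)
      · have hm := H.min k d hke hda
        rw [hbest' k ((H.b_le_g.trans_lt hgd).trans hm)]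
        exact hm
  · left
    have hdh := h2.trans_le H.g_le_h
    obtain ⟨g1, g2, g3, -⟩ := H.adj h2
    rw [← h3] at g1 g2 g3
    exact (sp_lt (hP j) (mem_remObjs.2 ⟨_, hjd⟩) g1 g2
      (g3 _ (best_mem _ hne) (H.min j d hjd hdh))).trans (hlow j d hjd hdh)
  · rcases I.ir_held j a hjd with hl | ⟨hr1, hr2, hr3⟩
    · exact Or.inl hl
    · right
      -- `j` qualifies to leave, so the leaver `i` holds a smaller object than `j`. That object lies
      -- below the peak of `j`, since the holders of objects from this peak up are blocked.
      have hha : σ h ≤ σ a := not_lt.1 fun hlt => absurd (H.min j a hjd hlt) (not_lt.2 hr2)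
      have hha' : σ h < σ a := by
        refine lt_of_le_of_ne hha fun he => hji ?_
        rw [← σ.injective he] at hjd
        exact I.inj _ _ _ hjd H.held_i
      have hhb : σ h < σ (best (P j) (remObjs st)) := by
        by_contra hcon
        have := hr3 i h H.held_i (not_lt.1 hcon) hha'
        rw [← H.b_eq] at this
        exact absurd this (not_lt.2 H.b_le)
      have hb := hbest' j (H.b_le.trans_lt hhb)
      rw [hb]
      refine ⟨hr1, hr2, fun k d hk hd hda => ?_⟩
      have hhd : σ h < σ d := hhb.trans_le hd
      obtain ⟨hki, ⟨rfl, rfl, -⟩ | ⟨-, e, hke, e1, e2, e3⟩ | ⟨hkc, hke, e1⟩⟩ := H.cases_held hk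
      · exact absurd hhd (lt_irrefl _)
      · have := (H.adj e2).2.2.2
        rw [← e3] at this
        exact absurd hhd (not_lt.2 (this.trans H.g_le_h))
      · have hm := hr3 k d hke hd hda
        rw [hbest' k ((H.b_le.trans_lt hhd).trans hm)]
        exact hm

lemma desInv_step {n : ℕ} [NeZero n] {σ : Fin n ≃ Fin n} {P : Fin n → Pref n}
    (hP : inD (spDomain σ) P) {st : AlgState n} (I : DesInv σ P st) :
    DesInv σ P (desStep σ P st) ∧
      (remAgents (desStep σ P st)).card = (remAgents st).card - 1 := by
  cases hl : leaver σ P st with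
  | none =>
    have : desStep σ P st = st := by unfold desStep; rw [hl]
    rw [this, leaver_none hl]
    exact ⟨I, rfl⟩
  | some i =>
    obtain ⟨h, b, c, g, H⟩ := desStep_spec hl
    generalize desStep σ P st = st' at H
    have hA := H.remAgents_eq
    have hS := H.remObjs_eq I.inj
    have hres : st.res i = none := by
      cases hr : st.res i with
      | none => rfl
      | some a =>
        have := (I.res_held i).2 ⟨a, hr⟩
        simp [H.held_i] at this
    have hres_i : st'.res i = some b := by simp [H.res_eq]
    have hres_ne : ∀ j, j ≠ i → st'.res j = st.res j := by
      intro j hj; simp [H.res_eq, hj]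
    refine ⟨⟨H.inj' I.inj, ?_, ?_, ?_, ir_held_step hP H I, ?_⟩,
      by rw [hA, Finset.card_erase_of_mem H.i_mem]⟩
    · intro j
      by_cases hj : j = i
      · subst hj; simp [H.out, hres_i]
      · rw [hres_ne j hj, ← I.res_held j, Option.eq_none_iff_forall_ne_some,
          Option.eq_none_iff_forall_ne_some, ← not_exists, ← not_exists, ← mem_remAgents,
          ← mem_remAgents, hA]
        simp [hj]
    · intro a ha
      by_cases hab : a = b
      · exact ⟨i, by rw [hres_i, hab]⟩
      · obtain ⟨k, hk⟩ := I.cover a fun hmem => ha (by rw [hS]; exact Finset.mem_erase.2 ⟨hab, hmem⟩)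
        have hki : k ≠ i := by rintro rfl; simp [hres] at hk
        exact ⟨k, by rw [hres_ne k hki, hk]⟩
    · intro j a ha
      by_cases hj : j = i
      · subst hj
        obtain rfl : b = a := by simpa [hres_i] using ha
        rw [H.b_eq]
        rcases I.ir_held j h H.held_i with h1 | h1
        · exact (best_le _ (mem_remObjs.2 ⟨j, H.held_i⟩)).trans h1
        · exact h1.1
      · rw [hres_ne j hj] at ha
        exact I.ir_res j a ha
    · intro m' hinj hm
      have hold : ∀ j a, st.res j = some a → m' j = a := by
        refine I.eff m' hinj fun j a ha => ?_
        have hj : j ≠ i := by rintro rfl; simp [hres] at ha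
        exact hm j a (by rw [hres_ne j hj, ha])
      intro j a ha
      by_cases hj : j = i
      · subst hj
        obtain rfl : b = a := by simpa [hres_i] using ha
        have hle := hm j b ha
        by_cases hmem : m' j ∈ remObjs st
        · apply (P j).injective
          refine le_antisymm hle ?_
          rw [H.b_eq]
          exact best_le _ hmem
        · -- An object already taken belongs to an earlier leaver under `m'` too.
          obtain ⟨k, hk⟩ := I.cover _ hmem
          have : k = j := hinj (hold k _ hk)
          subst this
          simp [hres] at hk
      · rw [hres_ne j hj] at ha
        exact hold j a ha

theorem designator_efficient_IR (n : ℕ) [NeZero n] (hn : 3 ≤ n) (σ : Fin n ≃ Fin n) :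
    ∀ P : Fin n → Pref n, inD (spDomain σ) P →
      EffAt P (designator σ P) ∧ IRAt P (designator σ P) := by
  intro P hP
  have key : ∀ k, DesInv σ P ((desStep σ P)^[k] (desInit P)) ∧
      (remAgents ((desStep σ P)^[k] (desInit P))).card ≤ n - k := by
    intro k
    induction k with
    | zero =>
      refine ⟨desInv_init σ P, ?_⟩
      simpa using Finset.card_le_univ (remAgents (desInit P))
    | succ k ih =>
      rw [Function.iterate_succ_apply']
      obtain ⟨h1, h2⟩ := desInv_step hP ih.1
      exact ⟨h1, by omega⟩
  obtain ⟨I, hcard⟩ := key n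
  have hempty : remAgents ((desStep σ P)^[n] (desInit P)) = ∅ := by
    rw [← Finset.card_eq_zero]; omega
  have hres : ∀ i, ((desStep σ P)^[n] (desInit P)).res i = some (designator σ P i) := by
    intro i
    have hnone : ((desStep σ P)^[n] (desInit P)).held i = none := by
      by_contra hcon
      obtain ⟨a, ha⟩ := Option.ne_none_iff_exists'.1 hcon
      have : i ∈ remAgents ((desStep σ P)^[n] (desInit P)) := mem_remAgents.2 ⟨a, ha⟩
      simp [hempty] at this
    obtain ⟨a, ha⟩ := (I.res_held i).1 hnone
    simp [designator, ha]
  refine ⟨?_, fun i => I.ir_res i _ (hres i)⟩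
  rintro ⟨m', hbij, hw, j, hj⟩
  have := I.eff m' hbij.1 (fun i a ha => by
    rw [hres i] at ha
    rw [← Option.some.inj ha]
    exact hw i) j _ (hres j)
  rw [this] at hj
  exact lt_irrefl _ hj
end

section
/- Let D be a set of strict linear orders over a finite set of objects O. For objects x, y, z define the restriction →(x,y,z) ∈ R(D) to mean: for every P ∈ D, if x is the P-best object of {x,y,z} then y P z; and define the ternary relation (x,y,z) ∈ B(D) to mean both →(x,y,z) ∈ R(D) and →(z,y,x) ∈ R(D). Then the relations in B(D) are transitive: for any four distinct objects x, y, z, o ∈ O, if (x,y,z) ∈ B(D) and (y,z,o) ∈ B(D), then (x,y,o) ∈ B(D) and (x,z,o) ∈ B(D). -/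
theorem best_eq_iff {n : ℕ} [NeZero n] (p : Pref n) (S : Finset (Fin n)) (a : Fin n)
    (ha : a ∈ S) : best p S = a ↔ ∀ b ∈ S, p a ≤ p b := by
  unfold best
  cases h : S.toList.argmin (fun o => p o) with
  | none =>
    rw [List.argmin_eq_none, Finset.toList_eq_nil] at h
    simp [h] at ha
  | some m =>
    have hm : m ∈ S := Finset.mem_toList.1 (List.argmin_mem h)
    have hmin : ∀ b ∈ S, p m ≤ p b := fun b hb =>
      List.le_of_mem_argmin (Finset.mem_toList.2 hb) h
    simp only [Option.getD_some]
    constructor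
    · rintro rfl
      exact hmin
    · intro hle
      exact p.injective (le_antisymm (hmin a ha) (hle m hm))

/-- `(x,y,z) ∈ B(D)` means that no preference in `D` ranks `y` last among `x`, `y`, `z`: when `y`
is not already best, one of the two restrictions applies to the best object. -/
theorem relB_iff {n : ℕ} [NeZero n] (D : Set (Pref n)) (x y z : Fin n)
    (hxy : x ≠ y) (hyz : y ≠ z) :
    RelB D x y z ↔ ∀ p ∈ D, p y < p x ∨ p y < p z := by
  have key : ∀ p : Pref n,
      ((best p {x, y, z} = x → prefers p y z) ∧ (best p {z, y, x} = z → prefers p y x)) ↔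
        (p y < p x ∨ p y < p z) := by
    intro p
    rw [best_eq_iff p _ x (by simp), best_eq_iff p _ z (by simp)]
    have h1 : p x ≠ p y := p.injective.ne hxy
    have h2 : p y ≠ p z := p.injective.ne hyz
    simp only [Finset.mem_insert, Finset.mem_singleton, forall_eq_or_imp, forall_eq, le_refl,
      true_and, prefers]
    omega
  simp only [RelB, RestrR, ← forall_and, ← key]

theorem relB_transitive (n : ℕ) [NeZero n] (D : Set (Pref n)) (x y z o : Fin n)
    (hxy : x ≠ y) (hxz : x ≠ z) (hxo : x ≠ o)
    (hyz : y ≠ z) (hyo : y ≠ o) (hzo : z ≠ o)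
    (h1 : RelB D x y z) (h2 : RelB D y z o) :
    RelB D x y o ∧ RelB D x z o := by
  rw [relB_iff D _ _ _ hxy hyz] at h1
  rw [relB_iff D _ _ _ hyz hzo] at h2
  rw [relB_iff D _ _ _ hxy hyo, relB_iff D _ _ _ hxz hzo, ← forall₂_and]
  intro p hp
  have hyo' : p y ≠ p o := p.injective.ne hyo
  have h1p := h1 p hp
  have h2p := h2 p hp
  omega
end
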